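/- For s > 2 and x ∈ [0,1), the function φ_s(x) = x ∫₀¹ dz / √(1 − z^{s−1} − x²(z² − z^{s−1})) is differentiable in x with derivative φ_s′(x) = ∫₀¹ (1 − z^{s−1}) / (1 − z^{s−1} − x²(z² − z^{s−1}))^{3/2} dz. -/

import Mathlib

/-!
Write `D(y, z) = 1 - z^(s-1) - y² (z² - z^(s-1)) = (1 - y²)(1 - z^(s-1)) + y² (1 - z²)`.
For `0 < z < 1` the integrand `y / √D` has `y`-derivative `(1 - z^(s-1)) / D^(3/2)`, so the claim is
differentiation under the integral sign. Since `s > 2`, both `z^(s-1)` and `z²` are at most `z`, so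
`D ≥ 1 - z` for `y² ≤ 1`; also `D ≥ (1 - y²)(1 - z^(s-1))`. Hence for `|y| < r < 1` the derivative
is dominated by the integrable function `(1 - r²)⁻¹ (1 - z)^(-1/2)`.
-/

open Real Set MeasureTheory

/-- The deviation-angle function `φ_s(x) = x ∫₀¹ dz / √(1 − z^(s−1) − x²(z² − z^(s−1)))`. -/
noncomputable def phiS (s x : ℝ) : ℝ :=
  x * ∫ z in (0:ℝ)..1, 1 / Real.sqrt (1 - z ^ (s - 1) - x ^ 2 * (z ^ 2 - z ^ (s - 1)))

/-- The radicand `1 - z^(s-1) - y² (z² - z^(s-1))`. -/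
noncomputable def radicand (s y z : ℝ) : ℝ :=
  1 - z ^ (s - 1) - y ^ 2 * (z ^ 2 - z ^ (s - 1))

lemma rpow_le_self_of_two_lt {s z : ℝ} (hs : 2 < s) (hz : z ∈ Ioo (0:ℝ) 1) : z ^ (s - 1) ≤ z := by
  have h := Real.rpow_le_rpow_of_exponent_ge hz.1 hz.2.le (show (1:ℝ) ≤ s - 1 by linarith)
  rwa [Real.rpow_one] at h

lemma one_sub_le_radicand {s y z : ℝ} (hs : 2 < s) (hz : z ∈ Ioo (0:ℝ) 1) (hy : y ^ 2 ≤ 1) :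
    1 - z ≤ radicand s y z := by
  have hp := rpow_le_self_of_two_lt hs hz
  have hz2 : z ^ 2 ≤ z := by nlinarith [hz.1, hz.2]
  unfold radicand
  nlinarith [mul_nonneg (sub_nonneg.2 hy) (sub_nonneg.2 hp),
    mul_nonneg (sq_nonneg y) (sub_nonneg.2 hz2)]

lemma mul_le_radicand {s y z : ℝ} (hz : z ∈ Ioo (0:ℝ) 1) :
    (1 - y ^ 2) * (1 - z ^ (s - 1)) ≤ radicand s y z := by
  have hz2 : z ^ 2 ≤ 1 := by nlinarith [hz.1, hz.2]
  unfold radicand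
  nlinarith [mul_nonneg (sq_nonneg y) (sub_nonneg.2 hz2)]

lemma rpow_three_halves {d : ℝ} (hd : 0 < d) : d ^ ((3:ℝ)/2) = d * √d := by
  rw [Real.sqrt_eq_rpow, show (3:ℝ)/2 = 1 + 1/2 by norm_num, Real.rpow_add hd, Real.rpow_one]

lemma one_div_sqrt_radicand_le {s y z : ℝ} (hs : 2 < s) (hz : z ∈ Ioo (0:ℝ) 1) (hy : y ^ 2 ≤ 1) :
    1 / √(radicand s y z) ≤ (1 - z) ^ (-(1/2) : ℝ) := by
  have h0 : 0 < 1 - z := by linarith [hz.2]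
  rw [Real.rpow_neg h0.le, ← Real.sqrt_eq_rpow, ← one_div]
  exact one_div_le_one_div_of_le (Real.sqrt_pos.2 h0)
    (Real.sqrt_le_sqrt (one_sub_le_radicand hs hz hy))

lemma deriv_integrand_le {s y r z : ℝ} (hs : 2 < s) (hz : z ∈ Ioo (0:ℝ) 1) (hr : r ^ 2 < 1)
    (hy : y ^ 2 ≤ r ^ 2) :
    ‖(1 - z ^ (s - 1)) / radicand s y z ^ ((3:ℝ)/2)‖
      ≤ (1 - r ^ 2)⁻¹ * (1 - z) ^ (-(1/2) : ℝ) := by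
  have hy1 : y ^ 2 ≤ 1 := by linarith
  have hd : 0 < radicand s y z := by linarith [one_sub_le_radicand hs hz hy1, hz.2]
  have hp : 0 ≤ 1 - z ^ (s - 1) := by linarith [rpow_le_self_of_two_lt hs hz, hz.2]
  have hr0 : 0 < 1 - r ^ 2 := by linarith
  have h1 : (1 - z ^ (s - 1)) / radicand s y z ≤ (1 - r ^ 2)⁻¹ := by
    rw [div_le_iff₀ hd, ← div_eq_inv_mul, le_div_iff₀ hr0]
    nlinarith [mul_le_radicand (s := s) (y := y) hz, mul_nonneg hp (sub_nonneg.2 hy)]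
  rw [rpow_three_halves hd, Real.norm_of_nonneg (by positivity), ← div_div, div_eq_mul_one_div]
  exact mul_le_mul h1 (one_div_sqrt_radicand_le hs hz hy1) (by positivity) (by positivity)

lemma hasDerivAt_integrand {s y z : ℝ} (hd : 0 < radicand s y z) :
    HasDerivAt (fun y => y * (1 / √(radicand s y z)))
      ((1 - z ^ (s - 1)) / radicand s y z ^ ((3:ℝ)/2)) y := by
  have h1 : HasDerivAt (fun y => radicand s y z) (-(2 * y * (z ^ 2 - z ^ (s - 1)))) y := by
    unfold radicand
    simpa using (((hasDerivAt_id y).pow 2).mul_const (z ^ 2 - z ^ (s - 1))).const_sub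
      (1 - z ^ (s - 1))
  have hq := Real.sqrt_pos.2 hd
  have h2 := (hasDerivAt_id y).div (h1.sqrt hd.ne') hq.ne'
  have h3 := Real.sq_sqrt hd.le
  have e : radicand s y z = 1 - z ^ (s - 1) - y ^ 2 * (z ^ 2 - z ^ (s - 1)) := rfl
  refine (h2.congr_deriv ?_).congr_of_eventuallyEq
    (Filter.Eventually.of_forall fun w => by simp [div_eq_mul_inv])
  have e2 : 1 - z ^ (s - 1) = radicand s y z + y ^ 2 * (z ^ 2 - z ^ (s - 1)) := by rw [e]; ring
  rw [rpow_three_halves hd, e2, h3]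
  simp only [id]
  field_simp
  rw [h3]
  ring

lemma intervalIntegrable_one_sub_rpow :
    IntervalIntegrable (fun z : ℝ => (1 - z) ^ (-(1/2) : ℝ)) volume 0 1 := by
  have h := (intervalIntegral.intervalIntegrable_rpow' (a := 0) (b := 1)
    (r := (-(1/2) : ℝ)) (by norm_num)).comp_sub_left 1
  simpa using h.symm

/-- The endpoint `1`, where the radicand vanishes, is a null set and can be ignored. -/
lemma ae_mem_Ioo {P : ℝ → Prop} (h : ∀ z ∈ Ioo (0:ℝ) 1, P z) :
    ∀ᵐ z ∂(volume : Measure ℝ), z ∈ uIoc (0:ℝ) 1 → P z := by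
  filter_upwards [Measure.ae_ne volume (1:ℝ)] with z hz1 hz
  rw [uIoc_of_le zero_le_one] at hz
  exact h z ⟨hz.1, lt_of_le_of_ne hz.2 hz1⟩

/-- For `s > 2` and `x ∈ [0,1)`, `φ_s` is differentiable at `x` with derivative
`φ_s′(x) = ∫₀¹ (1 − z^(s−1)) / (1 − z^(s−1) − x²(z² − z^(s−1)))^(3/2) dz`. -/
theorem stmt4 (s : ℝ) (hs : 2 < s) (x : ℝ) (hx : x ∈ Ico (0:ℝ) 1) :
    HasDerivAt (phiS s)
      (∫ z in (0:ℝ)..1,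
        (1 - z ^ (s - 1)) / (1 - z ^ (s - 1) - x ^ 2 * (z ^ 2 - z ^ (s - 1))) ^ ((3:ℝ)/2)) x := by
  have hphi : phiS s = fun y => ∫ z in (0:ℝ)..1, y * (1 / √(radicand s y z)) := by
    funext y
    rw [intervalIntegral.integral_const_mul]
    rfl
  rw [hphi]
  change HasDerivAt _ (∫ z in (0:ℝ)..1,
    (1 - z ^ (s - 1)) / radicand s x z ^ ((3:ℝ)/2)) x
  -- The radius `r` keeps `1 - y²` bounded away from `0` near `x`, also when `x = 0`.
  obtain ⟨r, hxr, hr1⟩ := exists_between hx.2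
  have hr0 : 0 < r := hx.1.trans_lt hxr
  have hr : r ^ 2 < 1 := by nlinarith
  have hball : ∀ y ∈ Ioo (-r) r, y ^ 2 ≤ r ^ 2 := fun y hy => by nlinarith [hy.1, hy.2]
  have hxm : x ∈ Ioo (-r) r := ⟨by linarith [hx.1], hxr⟩
  have hmeas : ∀ y, Measurable fun z => radicand s y z := fun y => by
    unfold radicand; fun_prop
  have hmF : ∀ y, Measurable fun z => y * (1 / √(radicand s y z)) := fun y => by
    have := hmeas y
    fun_prop
  have hmF' : Measurable fun z => (1 - z ^ (s - 1)) / radicand s x z ^ ((3:ℝ)/2) := by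
    have := hmeas x
    fun_prop
  refine (intervalIntegral.hasDerivAt_integral_of_dominated_loc_of_deriv_le
    (F := fun y z => y * (1 / √(radicand s y z)))
    (F' := fun y z => (1 - z ^ (s - 1)) / radicand s y z ^ ((3:ℝ)/2))
    (bound := fun z => (1 - r ^ 2)⁻¹ * (1 - z) ^ (-(1/2) : ℝ))
    (Ioo_mem_nhds hxm.1 hxm.2) (Filter.Eventually.of_forall fun y => (hmF y).aestronglyMeasurable)
    ?_ hmF'.aestronglyMeasurable
    (ae_mem_Ioo fun z hz y hy => deriv_integrand_le hs hz hr (hball y hy))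
    (intervalIntegrable_one_sub_rpow.const_mul _)
    (ae_mem_Ioo fun z hz y hy => hasDerivAt_integrand ?_)).2
  · refine (intervalIntegrable_one_sub_rpow.const_mul |x|).mono_fun
      (hmF x).aestronglyMeasurable ?_
    refine (ae_restrict_iff' measurableSet_uIoc).2 (ae_mem_Ioo fun z hz => ?_)
    have h0 : 0 < 1 - z := by linarith [hz.2]
    beta_reduce
    rw [norm_mul, norm_mul, Real.norm_of_nonneg (by positivity : 0 ≤ 1 / √(radicand s x z)),
      Real.norm_of_nonneg (by positivity : 0 ≤ (1 - z) ^ (-(1/2) : ℝ)), Real.norm_eq_abs,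
      Real.norm_eq_abs, abs_abs]
    exact mul_le_mul_of_nonneg_left
      (one_div_sqrt_radicand_le hs hz ((hball x hxm).trans hr.le)) (abs_nonneg x)
  · linarith [one_sub_le_radicand hs hz ((hball y hy).trans hr.le), hz.2]
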